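/- The modular discriminant Δ satisfies the van der Pol–Rankin fourth-order nonlinear ODE: for every τ ∈ ℍ, 2Δ³Δ'''' − 10Δ²Δ'Δ''' − 3Δ²(Δ'')² + 24Δ(Δ')²Δ'' − 13(Δ')⁴ = 0. -/

import Mathlib

open Complex

noncomputable section

/-- The normalized derivative `F' = (2πi)⁻¹ dF/dτ`. -/
def nderiv (F : ℂ → ℂ) : ℂ → ℂ := fun τ => (2 * Real.pi * Complex.I)⁻¹ * deriv F τ

/-- `q = e^{2πiτ}`. -/
def qq (τ : ℂ) : ℂ := Complex.exp (2 * Real.pi * Complex.I * τ)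

/-- The modular discriminant `Δ(τ) = q ∏_{n≥1} (1 − qⁿ)²⁴`. -/
def Δ : ℂ → ℂ := fun τ => qq τ * ∏' n : ℕ, (1 - qq τ ^ (n + 1)) ^ 24

/-!
The ring generated by `E₂`, `E₄`, `E₆` is stable under `D = q d/dq` by Ramanujan's identities
`D E₂ = (E₂² - E₄) / 12`, `D E₄ = (E₂ E₄ - E₆) / 3`, `D E₆ = (E₂ E₆ - E₄²) / 2`. Each of them holds
because the difference of its two sides, rewritten through the Serre derivative, is a cusp form of
level one and weight less than `12`, hence zero. Since `D Δ = E₂ Δ`, every derivative of `Δ` is `Δ`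
times a polynomial in `E₂`, `E₄`, `E₆`, and the differential equation becomes a polynomial identity.
-/

namespace VanDerPolRankin

open UpperHalfPlane hiding I
open Derivative EisensteinSeries Filter Function
open ModularForm (E₄ E₆ discriminant)
open scoped Manifold Topology MatrixGroups ModularForm Real

lemma nderiv_eq_normalizedDerivOfComplex {F : ℂ → ℂ} {f : ℍ → ℂ} (h : ∀ z : ℍ, F z = f z)
    (z : ℍ) : nderiv F z = D f z := by
  have hcongr : F =ᶠ[𝓝 (z : ℂ)] f ∘ ofComplex := by
    filter_upwards [isOpen_upperHalfPlaneSet.mem_nhds z.im_pos] with w hw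
    simpa only [comp_apply, ofComplex_apply_of_im_pos hw] using h ⟨w, hw⟩
  rw [nderiv, hcongr.deriv_eq, normalizedDerivOfComplex]

section Limits

lemma tendsto_atImInfty_of_hasSum_qExpansion {h : ℝ} (hh : 0 < h) {f : ℍ → ℂ} {c : ℕ → ℂ}
    (hf : ∀ τ : ℍ, HasSum (fun m ↦ c m • Periodic.qParam h τ ^ m) (f τ)) :
    Tendsto f atImInfty (𝓝 (c 0)) := by
  let g : ℍ → ℂ := fun τ ↦ (f τ - c 0) / Periodic.qParam h τ
  have hfg : ∀ τ : ℍ, Periodic.qParam h τ * g τ + c 0 = f τ := fun τ ↦ by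
    rw [mul_div_cancel₀ _ (Periodic.qParam_ne_zero _), sub_add_cancel]
  have hg : IsBoundedAtImInfty g := by
    refine isBoundedAtImInfty_of_hasSum_qExpansion (c := fun m ↦ c (m + 1)) hh fun τ ↦ ?_
    have hshift := ((hasSum_nat_add_iff' 1).mpr (hf τ)).div_const (Periodic.qParam h τ)
    simpa [g, pow_succ, ← mul_assoc, Periodic.qParam_ne_zero] using hshift
  have hqg : Tendsto (fun τ : ℍ ↦ Periodic.qParam h τ * g τ) atImInfty (𝓝 0) :=
    ZeroAtFilter.mul_boundedAtFilter (qParam_tendsto_atImInfty hh) hg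
  simpa only [hfg, zero_add] using hqg.add_const (c 0)

lemma tendsto_atImInfty_E2 : Tendsto E2 atImInfty (𝓝 1) := by
  refine tendsto_atImInfty_of_hasSum_qExpansion
    (c := fun m ↦ if m = 0 then 1 else -24 * ArithmeticFunction.sigma 1 m) one_pos fun τ ↦ ?_
  simpa only [Periodic.qParam, ofReal_one, div_one] using hasSum_qExpansion_E2 τ

lemma tendsto_atImInfty_E {k : ℕ} (hk : 3 ≤ k) (hk2 : Even k) :
    Tendsto (ModularForm.E hk) atImInfty (𝓝 1) := by
  rw [← E_qExpansion_coeff_zero hk hk2]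
  refine tendsto_atImInfty_of_hasSum_qExpansion
    (c := fun m ↦ (qExpansion 1 (ModularForm.E hk)).coeff m) one_pos fun τ ↦ ?_
  simpa using ModularForm.hasSum_qExpansion (ModularForm.E hk) one_pos
    one_mem_strictPeriods_SL τ

lemma norm_two_pi_I_inv_le_one : ‖(2 * π * I : ℂ)⁻¹‖ ≤ 1 := by
  rw [norm_inv]
  refine inv_le_one_of_one_le₀ ?_
  simp only [Complex.norm_mul, norm_ofNat, norm_real, norm_I, mul_one,
    Real.norm_of_nonneg Real.pi_pos.le]
  linarith [Real.pi_gt_three]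

lemma sub_le_im_of_mem_closedBall {z w : ℂ} {r : ℝ} (hw : w ∈ Metric.closedBall z r) :
    z.im - r ≤ w.im := by
  have him := (abs_im_le_norm (w - z)).trans (mem_closedBall_iff_norm.mp hw)
  rw [sub_im] at him
  linarith [neg_le_of_abs_le him]

lemma norm_normalizedDerivOfComplex_le {F : ℍ → ℂ} (hF : MDiff F) {c : ℂ} {ε : ℝ} {z : ℍ}
    (hz : 1 < z.im) (hFc : ∀ w : ℍ, z.im - 1 ≤ w.im → ‖F w - c‖ ≤ ε) : ‖D F z‖ ≤ ε := by
  have hpos : ∀ w ∈ Metric.closedBall (z : ℂ) 1, 0 < w.im := fun w hw ↦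
    (sub_pos.mpr hz).trans_le (sub_le_im_of_mem_closedBall hw)
  have hdiff : DifferentiableOn ℂ (fun w ↦ (F ∘ ofComplex) w - c) (Metric.closedBall z 1) :=
    ((UpperHalfPlane.mdifferentiable_iff.mp hF).mono hpos).sub_const c
  have hbound : ∀ w ∈ Metric.sphere (z : ℂ) 1, ‖(F ∘ ofComplex) w - c‖ ≤ ε := fun w hw ↦ by
    have hw := Metric.sphere_subset_closedBall hw
    rw [comp_apply, ofComplex_apply_of_im_pos (hpos w hw)]
    exact hFc _ (sub_le_im_of_mem_closedBall hw)
  have hcauchy : ‖deriv (F ∘ ofComplex) z‖ ≤ ε := by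
    simpa only [deriv_sub_const, div_one] using
      norm_deriv_le_of_forall_mem_sphere_norm_le one_pos (hdiff.diffContOnCl_ball subset_rfl) hbound
  calc ‖D F z‖ = ‖(2 * π * I : ℂ)⁻¹‖ * ‖deriv (F ∘ ofComplex) z‖ := norm_mul _ _
    _ ≤ 1 * ε := mul_le_mul norm_two_pi_I_inv_le_one hcauchy (norm_nonneg _) zero_le_one
    _ = ε := one_mul ε

lemma tendsto_atImInfty_normalizedDerivOfComplex {F : ℍ → ℂ} (hF : MDiff F) {c : ℂ}
    (hFc : Tendsto F atImInfty (𝓝 c)) : Tendsto (D F) atImInfty (𝓝 0) := by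
  rw [Metric.nhds_basis_closedBall.tendsto_right_iff] at hFc ⊢
  intro ε hε
  obtain ⟨A, hA⟩ := (atImInfty_mem _).mp (hFc ε hε)
  refine (atImInfty_mem _).mpr ⟨max A 1 + 1, fun z hz ↦ mem_closedBall_zero_iff.mpr ?_⟩
  refine norm_normalizedDerivOfComplex_le hF (c := c) ?_ fun w hw ↦ ?_
  · linarith [le_max_right A 1]
  · exact mem_closedBall_iff_norm.mp (hA w (by linarith [le_max_left A 1]))

lemma tendsto_atImInfty_serreDerivative (k : ℂ) {F : ℍ → ℂ} (hF : MDiff F) {c : ℂ}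
    (hFc : Tendsto F atImInfty (𝓝 c)) :
    Tendsto (serreDerivative k F) atImInfty (𝓝 (-(k / 12) * c)) := by
  have h := (tendsto_atImInfty_normalizedDerivOfComplex hF hFc).sub
    ((tendsto_atImInfty_E2.const_mul (k * 12⁻¹)).mul hFc)
  rw [serreDerivative_eq]
  simpa only [mul_one, zero_sub, neg_mul, div_eq_mul_inv] using h

end Limits

section SlashInvariance

lemma eq_zero_of_slash_eq_of_isZeroAtImInfty {k : ℤ} (hk : k < 12) {f : ℍ → ℂ} (hf : MDiff f)
    (hslash : ∀ γ : SL(2, ℤ), f ∣[k] γ = f) (hzero : IsZeroAtImInfty f) : f = 0 := by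
  let F : CuspForm 𝒮ℒ k :=
    { toFun := f
      holo' := hf
      slash_action_eq' := by
        rintro _ ⟨γ, rfl⟩
        exact hslash γ
      zero_at_cusps' := fun hc ↦ by
        rw [OnePoint.isZeroAt_iff_forall_SL2Z hc]
        intro γ _
        exact (hslash γ).symm ▸ hzero }
  have hF : F = 0 :=
    rank_zero_iff_forall_zero.mp (CuspForm.rank_eq_zero_of_weight_lt_twelve hk) F
  exact congrArg DFunLike.coe hF

lemma eq_smul_of_slash_eq_of_tendsto {k : ℤ} (hk : k < 12) {f g : ℍ → ℂ} {c : ℂ}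
    (hf : MDiff f) (hg : MDiff g) (hfslash : ∀ γ : SL(2, ℤ), f ∣[k] γ = f)
    (hgslash : ∀ γ : SL(2, ℤ), g ∣[k] γ = g) (hfc : Tendsto f atImInfty (𝓝 c))
    (hg1 : Tendsto g atImInfty (𝓝 1)) : f = c • g := by
  refine sub_eq_zero.mp (eq_zero_of_slash_eq_of_isZeroAtImInfty hk (hf.sub (hg.const_smul c))
    (fun γ ↦ ?_) ?_)
  · rw [sub_eq_add_neg, SlashAction.add_slash, SlashAction.neg_slash, ModularForm.SL_smul_slash,
      hfslash, hgslash]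
  · simpa using! hfc.sub (hg1.const_smul c)

lemma serreDerivative_eq_smul {k : ℤ} (hk : k < 10) {f g : ℍ → ℂ} (hf : MDiff f) (hg : MDiff g)
    (hfslash : ∀ γ : SL(2, ℤ), f ∣[k] γ = f) (hgslash : ∀ γ : SL(2, ℤ), g ∣[k + 2] γ = g)
    (hf1 : Tendsto f atImInfty (𝓝 1)) (hg1 : Tendsto g atImInfty (𝓝 1)) :
    serreDerivative k f = (-(k / 12) : ℂ) • g :=
  eq_smul_of_slash_eq_of_tendsto (by lia) (serreDerivative_mdifferentiable k hf) hg
    (fun _ ↦ serreDerivative_slash_invariant hf (hfslash _)) hgslash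
    (by simpa using tendsto_atImInfty_serreDerivative k hf hf1) hg1

lemma D2_eq_smul_denom_zpow (γ : SL(2, ℤ)) :
    D2 γ = (2 * π * I * γ 1 0 : ℂ) • fun z : ℍ ↦ denom γ z ^ (-1 : ℤ) := by
  ext z
  rw [D2, Pi.smul_apply, zpow_neg_one, smul_eq_mul, div_eq_mul_inv]

lemma D2_mdifferentiable (γ : SL(2, ℤ)) : MDiff (D2 γ) :=
  D2_eq_smul_denom_zpow γ ▸ (mdifferentiable_denom_zpow _ _).const_smul _

lemma normalizedDerivOfComplex_D2 (γ : SL(2, ℤ)) :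
    D (D2 γ) = (4 * π ^ 2 : ℂ)⁻¹ • D2 γ ^ 2 := by
  have hpi : (π : ℂ) ≠ 0 := ofReal_ne_zero.mpr Real.pi_ne_zero
  rw [D2_eq_smul_denom_zpow, normalizedDerivOfComplex_smul _ _ (mdifferentiable_denom_zpow _ _)]
  ext z
  have hdenom : denom γ z ≠ 0 := denom_ne_zero _ z
  simp only [Pi.smul_apply, Pi.pow_apply, smul_eq_mul,
    ← nderiv_eq_normalizedDerivOfComplex (F := fun w ↦ denom γ w ^ (-1 : ℤ)) (fun _ ↦ rfl),
    nderiv, deriv_denom_zpow]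
  rw [show (γ : GL (Fin 2) ℝ) 1 0 = (γ 1 0 : ℝ) from rfl, show (-1 - 1 : ℤ) = -2 from rfl]
  push_cast
  field_simp
  rw [I_sq]
  ring

-- The anomaly of `E2` under `γ` cancels from its Serre derivative of parameter `1`, not `2`.
lemma serreDerivative_one_E2_slash (γ : SL(2, ℤ)) :
    serreDerivative 1 E2 ∣[(4 : ℤ)] γ = serreDerivative 1 E2 := by
  have hsplit : serreDerivative 1 E2 = serreDerivative (2 : ℤ) E2 + (12⁻¹ : ℂ) • (E2 * E2) := by
    ext z
    simp only [serreDerivative_apply, Pi.add_apply, Pi.smul_apply, Pi.mul_apply, smul_eq_mul]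
    push_cast
    ring
  have hserre : serreDerivative (2 : ℤ) E2 ∣[(4 : ℤ)] γ =
      serreDerivative (2 : ℤ) (E2 ∣[(2 : ℤ)] γ) :=
    serreDerivative_slash_equivariant E2_mdifferentiable
  have hmul : (E2 * E2) ∣[(4 : ℤ)] γ = E2 ∣[(2 : ℤ)] γ * E2 ∣[(2 : ℤ)] γ :=
    ModularForm.mul_slash_SL2 2 2 γ E2 E2
  have hD2 := D2_mdifferentiable γ
  rw [hsplit, SlashAction.add_slash, ModularForm.SL_smul_slash, hserre, hmul, E2_slash_action,
    riemannZeta_two, serreDerivative_sub _ _ _ E2_mdifferentiable (hD2.const_smul _),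
    serreDerivative_smul _ _ _ hD2]
  ext z
  simp only [normalizedDerivOfComplex_D2, serreDerivative_apply, Pi.add_apply, Pi.sub_apply,
    Pi.smul_apply, Pi.mul_apply, Pi.pow_apply, smul_eq_mul]
  push_cast
  field_simp
  ring

end SlashInvariance

section Ramanujan

lemma slash_SL_eq {k : ℤ} {F : Type*} [FunLike F ℍ ℂ] [SlashInvariantFormClass F 𝒮ℒ k] (f : F)
    (γ : SL(2, ℤ)) : ⇑f ∣[k] γ = f :=
  SlashInvariantFormClass.slash_action_eq f _ ⟨γ, rfl⟩

lemma E₄_mul_E₄_slash (γ : SL(2, ℤ)) : (⇑E₄ * ⇑E₄) ∣[(8 : ℤ)] γ = ⇑E₄ * ⇑E₄ :=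
  (ModularForm.mul_slash_SL2 4 4 γ E₄ E₄).trans (by rw [slash_SL_eq])

lemma tendsto_atImInfty_E₄ : Tendsto E₄ atImInfty (𝓝 1) := tendsto_atImInfty_E _ ⟨2, rfl⟩

lemma tendsto_atImInfty_E₆ : Tendsto E₆ atImInfty (𝓝 1) := tendsto_atImInfty_E _ ⟨3, rfl⟩

theorem normalizedDerivOfComplex_E2 : D E2 = (12⁻¹ : ℂ) • (E2 ^ 2 - E₄) := by
  have h : serreDerivative 1 E2 = (-(1 / 12) * 1 : ℂ) • ⇑E₄ :=
    eq_smul_of_slash_eq_of_tendsto (by lia) (serreDerivative_mdifferentiable 1 E2_mdifferentiable)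
      E₄.holo' serreDerivative_one_E2_slash (slash_SL_eq E₄)
      (tendsto_atImInfty_serreDerivative 1 E2_mdifferentiable tendsto_atImInfty_E2)
      tendsto_atImInfty_E₄
  ext z
  have hz := congrFun h z
  simp only [serreDerivative_apply, Pi.smul_apply, Pi.sub_apply, Pi.pow_apply, smul_eq_mul] at hz ⊢
  linear_combination hz

theorem normalizedDerivOfComplex_E₄ : D E₄ = (3⁻¹ : ℂ) • (E2 * E₄ - E₆) := by
  have h := serreDerivative_eq_smul (k := 4) (by lia) E₄.holo' E₆.holo' (slash_SL_eq E₄)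
    (slash_SL_eq E₆) tendsto_atImInfty_E₄ tendsto_atImInfty_E₆
  ext z
  have hz := congrFun h z
  simp only [serreDerivative_apply, Pi.smul_apply, Pi.sub_apply, Pi.mul_apply, smul_eq_mul] at hz ⊢
  push_cast at hz
  linear_combination hz

theorem normalizedDerivOfComplex_E₆ : D E₆ = (2⁻¹ : ℂ) • (E2 * E₆ - E₄ ^ 2) := by
  have h := serreDerivative_eq_smul (k := 6) (by lia) E₆.holo' (E₄.holo'.mul E₄.holo')
    (slash_SL_eq E₆) E₄_mul_E₄_slash tendsto_atImInfty_E₆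
    (by simpa using! tendsto_atImInfty_E₄.mul tendsto_atImInfty_E₄)
  ext z
  have hz := congrFun h z
  simp only [serreDerivative_apply, Pi.smul_apply, Pi.sub_apply, Pi.mul_apply, Pi.pow_apply,
    smul_eq_mul] at hz ⊢
  push_cast at hz
  linear_combination hz

end Ramanujan

section Discriminant

lemma discriminant_mdifferentiable : MDiff discriminant := CuspForm.discriminant.holo'

theorem normalizedDerivOfComplex_discriminant : D discriminant = E2 * discriminant := by
  ext z
  have heta : deriv ModularForm.eta z = π * I / 12 * E2 z * ModularForm.eta z := by
    rw [← ModularForm.logDeriv_eta_eq_E2, logDeriv_apply,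
      div_mul_cancel₀ _ (ModularForm.eta_ne_zero z.im_pos)]
  have hderiv := (ModularForm.differentiableAt_eta_of_mem_upperHalfPlaneSet z.im_pos).hasDerivAt
  rw [← nderiv_eq_normalizedDerivOfComplex (F := fun w ↦ ModularForm.eta w ^ 24) (f := discriminant)
      (fun _ ↦ rfl),
    nderiv, (hderiv.fun_pow 24).deriv, heta, Pi.mul_apply, discriminant]
  have hpi : (π : ℂ) ≠ 0 := ofReal_ne_zero.mpr Real.pi_ne_zero
  field_simp
  ring

lemma normalizedDerivOfComplex_mul_discriminant {F : ℍ → ℂ} (hF : MDiff F) :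
    D (F * discriminant) = (D F + E2 * F) * discriminant := by
  rw [normalizedDerivOfComplex_mul _ _ hF discriminant_mdifferentiable,
    normalizedDerivOfComplex_discriminant]
  ring

lemma normalizedDerivOfComplex_iterate_two_discriminant :
    D^[2] discriminant = ((13 / 12 : ℂ) • E2 ^ 2 - (1 / 12 : ℂ) • ⇑E₄) * discriminant := by
  rw [iterate_succ_apply', iterate_one, normalizedDerivOfComplex_discriminant,
    normalizedDerivOfComplex_mul_discriminant E2_mdifferentiable, normalizedDerivOfComplex_E2]
  algebra

lemma normalizedDerivOfComplex_iterate_three_discriminant :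
    D^[3] discriminant =
      ((91 / 72 : ℂ) • E2 ^ 3 - (7 / 24 : ℂ) • (E2 * E₄) + (1 / 36 : ℂ) • ⇑E₆) *
        discriminant := by
  have hP2 := E2_mdifferentiable.pow 2
  have hQ : MDiff E₄ := E₄.holo'
  have hP2' := hP2.const_smul (13 / 12 : ℂ)
  have hQ' := hQ.const_smul (1 / 12 : ℂ)
  rw [iterate_succ_apply', normalizedDerivOfComplex_iterate_two_discriminant,
    normalizedDerivOfComplex_mul_discriminant (hP2'.sub hQ'),
    normalizedDerivOfComplex_sub _ _ hP2' hQ', normalizedDerivOfComplex_smul _ _ hP2,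
    normalizedDerivOfComplex_smul _ _ hQ, normalizedDerivOfComplex_pow _ _ E2_mdifferentiable,
    normalizedDerivOfComplex_E2, normalizedDerivOfComplex_E₄]
  push_cast
  algebra

lemma normalizedDerivOfComplex_iterate_four_discriminant :
    D^[4] discriminant =
      ((455 / 288 : ℂ) • E2 ^ 4 - (35 / 48 : ℂ) • (E2 ^ 2 * E₄) + (5 / 36 : ℂ) • (E2 * E₆) +
        (1 / 96 : ℂ) • ⇑E₄ ^ 2) * discriminant := by
  have hQ : MDiff E₄ := E₄.holo'
  have hR : MDiff E₆ := E₆.holo'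
  have hP3 := E2_mdifferentiable.pow 3
  have hPQ := E2_mdifferentiable.mul hQ
  have hP3' := hP3.const_smul (91 / 72 : ℂ)
  have hPQ' := hPQ.const_smul (7 / 24 : ℂ)
  have hR' := hR.const_smul (1 / 36 : ℂ)
  rw [iterate_succ_apply', normalizedDerivOfComplex_iterate_three_discriminant,
    normalizedDerivOfComplex_mul_discriminant ((hP3'.sub hPQ').add hR'),
    normalizedDerivOfComplex_add _ _ (hP3'.sub hPQ') hR',
    normalizedDerivOfComplex_sub _ _ hP3' hPQ', normalizedDerivOfComplex_smul _ _ hP3,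
    normalizedDerivOfComplex_smul _ _ hPQ, normalizedDerivOfComplex_smul _ _ hR,
    normalizedDerivOfComplex_pow _ _ E2_mdifferentiable,
    normalizedDerivOfComplex_mul _ _ E2_mdifferentiable hQ, normalizedDerivOfComplex_E2,
    normalizedDerivOfComplex_E₄, normalizedDerivOfComplex_E₆]
  push_cast
  algebra

lemma Delta_eq_discriminant (z : ℍ) : Δ z = discriminant z := by
  rw [ModularForm.discriminant_eq_q_prod]
  simp [Δ, qq, ModularForm.eta_q, Periodic.qParam]

lemma nderiv_iterate_eq_iterate_normalizedDerivOfComplex {F : ℂ → ℂ} {f : ℍ → ℂ}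
    (h : ∀ z : ℍ, F z = f z) (n : ℕ) (z : ℍ) : nderiv^[n] F z = D^[n] f z := by
  induction n generalizing z with
  | zero => exact h z
  | succ n ih =>
    rw [iterate_succ_apply', iterate_succ_apply']
    exact nderiv_eq_normalizedDerivOfComplex ih z

end Discriminant

end VanDerPolRankin

open VanDerPolRankin

/-- The modular discriminant satisfies the van der Pol–Rankin fourth-order ODE. -/
theorem discriminant_vdPol_Rankin_ODE :
    ∀ τ : ℂ, 0 < τ.im →
      2 * Δ τ ^ 3 * nderiv (nderiv (nderiv (nderiv Δ))) τ -
      10 * Δ τ ^ 2 * nderiv Δ τ * nderiv (nderiv (nderiv Δ)) τ -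
      3 * Δ τ ^ 2 * (nderiv (nderiv Δ) τ) ^ 2 +
      24 * Δ τ * (nderiv Δ τ) ^ 2 * nderiv (nderiv Δ) τ -
      13 * (nderiv Δ τ) ^ 4 = 0 := by
  intro τ hτ
  lift τ to UpperHalfPlane using hτ
  have hD := nderiv_iterate_eq_iterate_normalizedDerivOfComplex Delta_eq_discriminant
  have hD1 : nderiv Δ τ = _ := hD 1 τ
  have hD2 : nderiv (nderiv Δ) τ = _ := hD 2 τ
  have hD3 : nderiv (nderiv (nderiv Δ)) τ = _ := hD 3 τ
  have hD4 : nderiv (nderiv (nderiv (nderiv Δ))) τ = _ := hD 4 τ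
  rw [hD1, hD2, hD3, hD4, Delta_eq_discriminant, Function.iterate_one,
    normalizedDerivOfComplex_discriminant, normalizedDerivOfComplex_iterate_two_discriminant,
    normalizedDerivOfComplex_iterate_three_discriminant,
    normalizedDerivOfComplex_iterate_four_discriminant]
  simp only [Pi.mul_apply, Pi.add_apply, Pi.sub_apply, Pi.smul_apply, Pi.pow_apply, smul_eq_mul]
  ring
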